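/- Let Z be a real Banach space with dim Z ≥ 3. Then there exist a continuous linear surjection L : Z → ℝ² and a compact convex subset C ⊆ Z such that no continuous map s : L(C) → C satisfies L(s(y)) = y for every y ∈ L(C). -/

import Mathlib

/-!
Let `K` be the closed convex hull of the curve `u ↦ ((u, u²), sign u)`, `-1 ≤ u ≤ 1`. Every point
of the parabola `y = x²` is exposed by its tangent line, and `sign` is constant near `u ≠ 0`, so the
fibre of `K` over `(u, u²)` is the single point `sign u`. A continuous section of the projection
of `K` to the plane would therefore restrict to a continuous extension of `sign` across `0`.
Hahn–Banach embeds `K` into `Z` with a continuous linear left inverse.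
-/

open Bornology Set

section ContinuousRightInverse

variable {X Y Z : Type*} [TopologicalSpace X] [TopologicalSpace Y] [TopologicalSpace Z]

/-- The restriction of `p` to `C` has a continuous right inverse, as a map onto its image. The right
inverse lives on the subtype `p '' C` and need not extend continuously to `Y`. -/
def HasContinuousRightInverseOn (p : X → Y) (C : Set X) : Prop :=
  ∃ s : ↥(p '' C) → ↥C, Continuous s ∧ ∀ y : ↥(p '' C), p (s y : X) = y

lemma HasContinuousRightInverseOn.of_comp {p : X → Y} {φ : Z → X} {D : Set Z}
    (h : HasContinuousRightInverseOn (p ∘ φ) D) (hφ : Continuous φ) :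
    HasContinuousRightInverseOn p (φ '' D) := by
  obtain ⟨s, hs, hps⟩ := h
  have himage : p '' (φ '' D) = p ∘ φ '' D := (image_comp p φ D).symm
  exact ⟨fun y => ⟨φ (s ⟨y, himage ▸ y.2⟩), mem_image_of_mem φ (s _).2⟩, by fun_prop,
    fun y => hps ⟨y, himage ▸ y.2⟩⟩

end ContinuousRightInverse

section LeftInverse

universe v w

variable {𝕜 : Type*} {V : Type v} {E : Type w} [AddCommGroup V] [TopologicalSpace V]
  [AddCommGroup E] [TopologicalSpace E]

lemma hasLeftInverse_of_injective_of_separatingDual [Field 𝕜] [TopologicalSpace 𝕜]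
    [IsTopologicalRing 𝕜] [Module 𝕜 V] [FiniteDimensional 𝕜 V] [ContinuousAdd V]
    [ContinuousSMul 𝕜 V] [Module 𝕜 E] [SeparatingDual 𝕜 E] {i : V →L[𝕜] E}
    (hi : Function.Injective i) : i.HasLeftInverse := by
  let b := Module.finBasis 𝕜 V
  have hextend : ∀ j, ∃ ψ : StrongDual 𝕜 E, i.toLinearMap.dualMap ψ = b.coord j := fun j =>
    SeparatingDual.dualMap_surjective_iff.2 hi (b.coord j)
  choose ψ hψ using hextend
  refine ⟨∑ j, (ψ j).smulRight (b j), fun v => ?_⟩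
  have hcoord : ∀ j, ψ j (i v) = b.repr v j := fun j => LinearMap.congr_fun (hψ j) v
  simp [hcoord, b.sum_repr]

lemma exists_hasLeftInverse_of_finrank_le_rank [NontriviallyNormedField 𝕜] [CompleteSpace 𝕜]
    [Module 𝕜 V] [FiniteDimensional 𝕜 V] [IsTopologicalAddGroup V] [ContinuousSMul 𝕜 V] [T2Space V]
    [Module 𝕜 E] [IsTopologicalAddGroup E] [ContinuousSMul 𝕜 E] [SeparatingDual 𝕜 E]
    (h : Module.finrank 𝕜 V ≤ Module.rank 𝕜 E) : ∃ i : V →L[𝕜] E, i.HasLeftInverse := by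
  have hlift : Cardinal.lift.{w} (Module.rank 𝕜 V) ≤ Cardinal.lift.{v} (Module.rank 𝕜 E) := by
    simpa [← Module.finrank_eq_rank] using h
  obtain ⟨i, hi⟩ := lift_rank_le_iff_exists_linearMap.1 hlift
  exact ⟨i.toContinuousLinearMap, hasLeftInverse_of_injective_of_separatingDual hi⟩

end LeftInverse

/-- The closed convex hull of the graph of `f` over the arc of the parabola `y = x²` with
abscissae in `S`; it lies in `ℝ² × ℝ`, so that `Prod.fst` projects it to the plane of the
parabola. -/
def parabolaHull (f : ℝ → ℝ) (S : Set ℝ) : Set ((ℝ × ℝ) × ℝ) :=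
  closedConvexHull ℝ ((fun u => ((u, u ^ 2), f u)) '' S)

section ParabolaHull

variable {f : ℝ → ℝ} {S : Set ℝ} {u c z : ℝ}

lemma mem_parabolaHull (hu : u ∈ S) : ((u, u ^ 2), f u) ∈ parabolaHull f S :=
  subset_closedConvexHull (mem_image_of_mem _ hu)

lemma convex_parabolaHull : Convex ℝ (parabolaHull f S) :=
  convex_closedConvexHull

lemma isCompact_parabolaHull (hS : IsBounded S) (hf : IsBounded (f '' S)) :
    IsCompact (parabolaHull f S) := by
  have harc : IsBounded ((fun u : ℝ => (u, u ^ 2)) '' S) :=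
    ((hS.isCompact_closure.image (by fun_prop)).isBounded).subset (image_mono subset_closure)
  have hgraph : IsBounded ((fun u => ((u, u ^ 2), f u)) '' S) :=
    (harc.prod hf).subset <| image_subset_iff.2 fun u hu =>
      ⟨mem_image_of_mem _ hu, mem_image_of_mem f hu⟩
  rw [parabolaHull, closedConvexHull_eq_closure_convexHull]
  exact (isBounded_convexHull.2 hgraph).isCompact_closure

-- `q.1.2 - 2 * u * q.1.1 + u ^ 2` is the height of `q.1` above the tangent at `(u, u ^ 2)`;
-- on the parabola it equals `(v - u) ^ 2`.
lemma abs_snd_sub_le_of_mem_parabolaHull (hf : ∀ v ∈ S, |f v - f u| ≤ c * (v - u) ^ 2)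
    {q : (ℝ × ℝ) × ℝ} (hq : q ∈ parabolaHull f S) :
    |q.2 - f u| ≤ c * (q.1.2 - 2 * u * q.1.1 + u ^ 2) := by
  let T : Set ((ℝ × ℝ) × ℝ) := {q | |q.2 - f u| ≤ c * (q.1.2 - 2 * u * q.1.1 + u ^ 2)}
  have hT_closed : IsClosed T := isClosed_le (by fun_prop) (by fun_prop)
  have hT_convex : Convex ℝ T := by
    intro q hq r hr a b ha hb hab
    obtain rfl : b = 1 - a := by linarith
    simp only [T, mem_ofPred_eq, abs_le, Prod.fst_add, Prod.snd_add, Prod.smul_fst, Prod.smul_snd,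
      smul_eq_mul] at hq hr ⊢
    exact ⟨by linear_combination a * hq.1 + (1 - a) * hr.1,
      by linear_combination a * hq.2 + (1 - a) * hr.2⟩
  have hgraph : (fun v => ((v, v ^ 2), f v)) '' S ⊆ T :=
    image_subset_iff.2 fun v hv => (hf v hv).trans_eq (by ring)
  exact closedConvexHull_min hgraph hT_convex hT_closed hq

lemma eq_of_mem_parabolaHull (hf : ∀ v ∈ S, |f v - f u| ≤ c * (v - u) ^ 2)
    (hz : ((u, u ^ 2), z) ∈ parabolaHull f S) : z = f u := by
  have hle : |z - f u| ≤ c * (u ^ 2 - 2 * u * u + u ^ 2) :=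
    abs_snd_sub_le_of_mem_parabolaHull hf hz
  have htangent : c * (u ^ 2 - 2 * u * u + u ^ 2) = 0 := by ring
  exact sub_eq_zero.1 (abs_nonpos_iff.1 (hle.trans_eq htangent))

lemma HasContinuousRightInverseOn.exists_continuous_of_fst_parabolaHull
    (h : HasContinuousRightInverseOn Prod.fst (parabolaHull f S)) :
    ∃ g : S → ℝ, Continuous g ∧
      ∀ (u : S) (c : ℝ), (∀ v ∈ S, |f v - f u| ≤ c * (v - u) ^ 2) → g u = f u := by
  obtain ⟨s, hs, hfst⟩ := h
  let arc : S → ↥(Prod.fst '' parabolaHull f S) := fun u =>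
    ⟨(u, u ^ 2), mem_image_of_mem Prod.fst (mem_parabolaHull u.2)⟩
  have harc : Continuous arc := by fun_prop
  refine ⟨fun u => (s (arc u) : (ℝ × ℝ) × ℝ).2, by fun_prop, fun u c hu => ?_⟩
  refine eq_of_mem_parabolaHull hu ?_
  have hfibre : (((u : ℝ), (u : ℝ) ^ 2), (s (arc u) : (ℝ × ℝ) × ℝ).2) = s (arc u) :=
    Prod.ext (hfst (arc u)).symm rfl
  exact hfibre ▸ (s (arc u)).2

end ParabolaHull

section Sign

lemma abs_sign_le_one (u : ℝ) : |u.sign| ≤ 1 := by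
  obtain h | h | h := u.sign_apply_eq <;> simp [h]

lemma abs_sign_sub_sign_le {u : ℝ} (hu : u ≠ 0) (v : ℝ) :
    |v.sign - u.sign| ≤ 2 / u ^ 2 * (v - u) ^ 2 := by
  obtain huv | huv := lt_or_ge 0 (v * u)
  · have hsign : v.sign = u.sign := by
      obtain ⟨hv, hu⟩ | ⟨hv, hu⟩ := pos_and_pos_or_neg_and_neg_of_mul_pos huv
      · rw [Real.sign_of_pos hv, Real.sign_of_pos hu]
      · rw [Real.sign_of_neg hv, Real.sign_of_neg hu]
    rw [hsign, sub_self, abs_zero]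
    positivity
  · have hdist : u ^ 2 ≤ (v - u) ^ 2 := by nlinarith [sq_nonneg v]
    calc |v.sign - u.sign| ≤ |v.sign| + |u.sign| := abs_sub _ _
      _ ≤ 2 := by linarith [abs_sign_le_one v, abs_sign_le_one u]
      _ = 2 / u ^ 2 * u ^ 2 := by field_simp
      _ ≤ 2 / u ^ 2 * (v - u) ^ 2 := by gcongr

lemma not_continuous_of_eq_sign {g : Icc (-1 : ℝ) 1 → ℝ}
    (hg : ∀ u : Icc (-1 : ℝ) 1, (u : ℝ) ≠ 0 → g u = (u : ℝ).sign) : ¬ Continuous g := by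
  intro hcont
  have : PreconnectedSpace (Icc (-1 : ℝ) 1) := Subtype.preconnectedSpace isPreconnected_Icc
  have hleft : g ⟨-1, by simp⟩ = -1 := by simp [hg, Real.sign_of_neg]
  have hright : g ⟨1, by simp⟩ = 1 := by simp [hg]
  have hrange : Icc (-1) 1 ⊆ range g := by
    simpa only [hleft, hright] using
      intermediate_value_univ (⟨-1, by simp⟩ : Icc (-1 : ℝ) 1) ⟨1, by simp⟩ hcont
  have hzero : ∀ t ∈ Ioo (0 : ℝ) 1, g ⟨0, by simp⟩ = t := by
    intro t ht
    obtain ⟨u, hu⟩ := hrange ⟨by linarith [ht.1], ht.2.le⟩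
    suffices hu_zero : (u : ℝ) = 0 from (congrArg g (Subtype.ext hu_zero.symm)).trans hu
    by_contra hu_ne
    rw [hg u hu_ne] at hu
    obtain h | h | h := (u : ℝ).sign_apply_eq <;> linarith [ht.1, ht.2]
  linarith [hzero (1 / 2) (by norm_num), hzero (1 / 3) (by norm_num)]

lemma not_hasContinuousRightInverseOn_fst_parabolaHull_sign :
    ¬ HasContinuousRightInverseOn Prod.fst (parabolaHull Real.sign (Icc (-1) 1)) := by
  intro h
  obtain ⟨g, hg, hg_eq⟩ := h.exists_continuous_of_fst_parabolaHull
  exact not_continuous_of_eq_sign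
    (fun u hu => hg_eq u _ fun v _ => abs_sign_sub_sign_le hu v) hg

lemma isCompact_parabolaHull_sign : IsCompact (parabolaHull Real.sign (Icc (-1) 1)) :=
  isCompact_parabolaHull (Metric.isBounded_Icc _ _) <|
    (Metric.isBounded_Icc (-1) 1).subset <|
      image_subset_iff.2 fun u _ => abs_le.1 (abs_sign_le_one u)

end Sign

theorem exists_no_continuous_right_inverse_of_three_le_rank_general
    {Z : Type*} [AddCommGroup Z] [Module ℝ Z] [TopologicalSpace Z] [IsTopologicalAddGroup Z]
    [ContinuousSMul ℝ Z] [SeparatingDual ℝ Z] (hZ : 3 ≤ Module.rank ℝ Z) :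
    ∃ (L : Z →L[ℝ] ℝ × ℝ) (C : Set Z), Function.Surjective L ∧
      IsCompact C ∧ Convex ℝ C ∧ ¬ HasContinuousRightInverseOn L C := by
  let K := parabolaHull Real.sign (Icc (-1) 1)
  have hrank : Module.finrank ℝ ((ℝ × ℝ) × ℝ) ≤ Module.rank ℝ Z := by simpa using hZ
  obtain ⟨i, φ, hφ⟩ := exists_hasLeftInverse_of_finrank_le_rank hrank
  refine ⟨(ContinuousLinearMap.fst ℝ (ℝ × ℝ) ℝ).comp φ, i '' K,
    Prod.fst_surjective.comp hφ.surjective, isCompact_parabolaHull_sign.image i.continuous,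
    convex_parabolaHull.linear_image i.toLinearMap, fun h => ?_⟩
  have hK : HasContinuousRightInverseOn Prod.fst (φ '' (i '' K)) :=
    HasContinuousRightInverseOn.of_comp (p := Prod.fst) h φ.continuous
  rw [hφ.image_image] at hK
  exact not_hasContinuousRightInverseOn_fst_parabolaHull_sign hK

/-- One direction of Remark (1) after Theorem 2.1: in every Banach space `Z` of dimension at
least 3 there exist a continuous linear surjection `L : Z → ℝ²` and a compact convex subset
`C ⊆ Z` such that the restriction `L|_C : C → L(C)` has no continuous right inverse. -/
theorem exists_no_continuous_right_inverse_of_three_le_rank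
    {Z : Type*} [NormedAddCommGroup Z] [NormedSpace ℝ Z] [CompleteSpace Z]
    (hZ : 3 ≤ Module.rank ℝ Z) :
    ∃ (L : Z →L[ℝ] ℝ × ℝ) (C : Set Z), Function.Surjective L ∧
      IsCompact C ∧ Convex ℝ C ∧
      ¬ ∃ s : ↥(⇑L '' C) → ↥C, Continuous s ∧ ∀ y : ↥(⇑L '' C), L (s y : Z) = (y : ℝ × ℝ) :=
  exists_no_continuous_right_inverse_of_three_le_rank_general hZ
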